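/- Let ρ ∈ (−1, 1), let X and V be independent standard normal random variables, set Y = ρX + √(1 − ρ²)V and Z = XY. Then for every twice differentiable function f : ℝ → ℝ such that E|f(Z)|, E|Z f(Z)|, E|f'(Z)|, E|Z f'(Z)|, E|Z f''(Z)|, E|X² f(Z)|, E|X² f'(Z)| and E|X² f''(Z)| are all finite, one has E[(1 − ρ²) Z f''(Z) + ((1 − ρ²) + 2ρZ) f'(Z) + (ρ − Z) f(Z)] = 0. -/

import Mathlib

open MeasureTheory ProbabilityTheory

open scoped NNReal

/-!
Integrating `(φ g)' = φ g' - v⁻¹ (x - μ) φ g` over the line, where `φ` is the density of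
`N(μ, v)`, gives Stein's lemma; conditioning on an independent variable gives a partial version.
Write `Y = aX + W` with `X ~ N(0, v)` and `W ~ N(0, w)` independent, and `Z = XY`. Integrating by
parts in `W` and in `X` respectively, one finds for every differentiable `h`
* `E[Z h(Z)] = a E[X² h(Z)] + w E[X² h'(Z)]`,
* `E[X² h(Z)] = v (E[h(Z)] + E[Z h'(Z)] + a E[X² h'(Z)])`.

Both identities for `h = f` and `h = f'` form a linear system from which all the moments weighted
by `X²` can be eliminated; what is left is the Stein identity for `Z`. The correlated standard
normals are the case `a = ρ`, `v = 1`, `w = 1 - ρ²`.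
-/

section SteinLemma

variable {E : Type*} [NormedAddCommGroup E] [NormedSpace ℝ E]

lemma integrable_of_integrable_sub_smul {ν : Measure ℝ} {g : ℝ → E} (c : ℝ)
    (hg : LocallyIntegrable g ν) (hint : Integrable (fun x ↦ (x - c) • g x) ν) :
    Integrable g ν := by
  rw [← integrableOn_univ, ← Set.union_compl_self (Metric.closedBall c 1)]
  refine (hg.integrableOn_isCompact (isCompact_closedBall c 1)).union ?_
  refine Integrable.mono hint.integrableOn hg.aestronglyMeasurable.restrict ?_
  filter_upwards [ae_restrict_mem Metric.isClosed_closedBall.measurableSet.compl] with x hx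
  have one_le_norm : 1 ≤ ‖x - c‖ := by
    rw [Set.mem_compl_iff, mem_closedBall_iff_norm, not_le] at hx
    exact hx.le
  simpa only [norm_smul] using le_mul_of_one_le_left (norm_nonneg _) one_le_norm

variable {μ : ℝ} {v : ℝ≥0}

lemma integrable_gaussianReal_iff_integrable_smul {g : ℝ → E} (hv : v ≠ 0) :
    Integrable g (gaussianReal μ v) ↔ Integrable (fun x ↦ gaussianPDFReal μ v x • g x) := by
  simp only [gaussianReal_of_var_ne_zero μ hv, ← toReal_gaussianPDF,
    integrable_withDensity_iff_integrable_smul' (measurable_gaussianPDF μ v)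
      (ae_of_all _ fun _ ↦ gaussianPDF_lt_top)]

lemma hasDerivAt_gaussianPDFReal (μ : ℝ) (v : ℝ≥0) (x : ℝ) :
    HasDerivAt (gaussianPDFReal μ v) (-((x - μ) / v) * gaussianPDFReal μ v x) x := by
  have hasDerivAt_exponent :
      HasDerivAt (fun y ↦ -(y - μ) ^ 2 / (2 * v)) (-(2 * (x - μ)) / (2 * v)) x := by
    simpa using ((((hasDerivAt_id x).sub_const μ).pow 2).neg.div_const (2 * (v : ℝ)))
  rw [gaussianPDFReal_def]
  refine (hasDerivAt_exponent.exp.const_mul _).congr_deriv ?_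
  field_simp

theorem integral_sub_mean_smul_gaussianReal {g g' : ℝ → E} (hg : ∀ x, HasDerivAt g (g' x) x)
    (hint : Integrable (fun x ↦ (x - μ) • g x) (gaussianReal μ v))
    (hint' : Integrable g' (gaussianReal μ v)) :
    ∫ x, (x - μ) • g x ∂gaussianReal μ v = (v : ℝ) • ∫ x, g' x ∂gaussianReal μ v := by
  rcases eq_or_ne v 0 with rfl | hv
  · rw [gaussianReal_zero_var, NNReal.coe_zero, zero_smul]
    exact integral_eq_zero_of_ae (by simp [ae_dirac_eq, Filter.EventuallyEq])
  have g_continuous : Continuous g :=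
    continuous_iff_continuousAt.2 fun x ↦ (hg x).continuousAt
  have g_integrable : Integrable g (gaussianReal μ v) :=
    integrable_of_integrable_sub_smul μ g_continuous.locallyIntegrable hint
  set φ := gaussianPDFReal μ v
  have hasDerivAt_density_smul (x : ℝ) :
      HasDerivAt (fun x ↦ φ x • g x) (φ x • g' x - (v : ℝ)⁻¹ • φ x • (x - μ) • g x) x := by
    refine ((hasDerivAt_gaussianPDFReal μ v x).smul (hg x)).congr_deriv ?_
    simp only [φ]
    module
  rw [integrable_gaussianReal_iff_integrable_smul hv] at hint hint' g_integrable
  have integral_deriv_eq_zero := integral_eq_zero_of_hasDerivAt_of_integrable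
    hasDerivAt_density_smul (hint'.sub (hint.fun_smul (v : ℝ)⁻¹)) g_integrable
  rw [integral_sub hint' (hint.fun_smul (v : ℝ)⁻¹), integral_smul, sub_eq_zero,
    eq_inv_smul_iff₀ (NNReal.coe_ne_zero.2 hv)] at integral_deriv_eq_zero
  simpa only [integral_gaussianReal_eq_integral_smul hv] using integral_deriv_eq_zero.symm

variable {Ω 𝓧 : Type*} {mΩ : MeasurableSpace Ω} {m𝓧 : MeasurableSpace 𝓧} {P : Measure Ω}
  {A : Ω → 𝓧} {B : Ω → ℝ}

theorem integral_sub_mean_smul_gaussianReal_of_indepFun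
    (hA : AEMeasurable A P) (hB : HasLaw B (gaussianReal μ v) P) (hindep : IndepFun A B P)
    {G G' : 𝓧 → ℝ → E} (hG : ∀ a b, HasDerivAt (G a) (G' a b) b)
    (hGmeas : AEStronglyMeasurable (fun p : 𝓧 × ℝ ↦ G p.1 p.2)
      ((P.map A).prod (gaussianReal μ v)))
    (hGmeas' : AEStronglyMeasurable (fun p : 𝓧 × ℝ ↦ G' p.1 p.2)
      ((P.map A).prod (gaussianReal μ v)))
    (hint : Integrable (fun ω ↦ (B ω - μ) • G (A ω) (B ω)) P)
    (hint' : Integrable (fun ω ↦ G' (A ω) (B ω)) P) :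
    ∫ ω, (B ω - μ) • G (A ω) (B ω) ∂P = (v : ℝ) • ∫ ω, G' (A ω) (B ω) ∂P := by
  have : IsProbabilityMeasure P := hB.isProbabilityMeasure
  have joint_law : HasLaw (fun ω ↦ (A ω, B ω)) ((P.map A).prod (gaussianReal μ v)) P :=
    hindep.hasLaw_prod ⟨hA, rfl⟩ hB
  have smul_meas : AEStronglyMeasurable (fun p : 𝓧 × ℝ ↦ (p.2 - μ) • G p.1 p.2)
      ((P.map A).prod (gaussianReal μ v)) := by
    fun_prop
  have integrable_joint {F : 𝓧 × ℝ → E}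
      (hF : AEStronglyMeasurable F ((P.map A).prod (gaussianReal μ v)))
      (hFint : Integrable (fun ω ↦ F (A ω, B ω)) P) :
      Integrable F ((P.map A).prod (gaussianReal μ v)) := by
    rw [← joint_law.map_eq] at hF ⊢
    exact (integrable_map_measure hF joint_law.aemeasurable).2 hFint
  have smul_int := integrable_joint smul_meas hint
  have deriv_int := integrable_joint hGmeas' hint'
  calc ∫ ω, (B ω - μ) • G (A ω) (B ω) ∂P
    _ = ∫ a, ∫ b, (b - μ) • G a b ∂gaussianReal μ v ∂P.map A :=
      (joint_law.integral_comp smul_meas).trans (integral_prod _ smul_int)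
    _ = ∫ a, (v : ℝ) • ∫ b, G' a b ∂gaussianReal μ v ∂P.map A := by
      refine integral_congr_ae ?_
      filter_upwards [smul_int.prod_right_ae, deriv_int.prod_right_ae] with a ha ha'
      exact integral_sub_mean_smul_gaussianReal (hG a) ha ha'
    _ = (v : ℝ) • ∫ ω, G' (A ω) (B ω) ∂P := by
      rw [integral_smul]
      exact congrArg _ ((joint_law.integral_comp hGmeas').trans (integral_prod _ deriv_int)).symm

end SteinLemma

section ProductNormal

variable {E : Type*} [NormedAddCommGroup E] [NormedSpace ℝ E] [CompleteSpace E]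
  {Ω : Type*} {mΩ : MeasurableSpace Ω} {P : Measure Ω}
  {X W Z : Ω → ℝ} {v w : ℝ≥0} {a : ℝ}

lemma integral_productNormal_smul_comp {h : ℝ → E} (hX : AEMeasurable X P)
    (hW : HasLaw W (gaussianReal 0 w) P) (hindep : IndepFun X W P)
    (hZ : ∀ ω, Z ω = X ω * (a * X ω + W ω)) (hh : Differentiable ℝ h)
    (hZh : Integrable (fun ω ↦ Z ω • h (Z ω)) P)
    (hXh : Integrable (fun ω ↦ X ω ^ 2 • h (Z ω)) P)
    (hXh' : Integrable (fun ω ↦ X ω ^ 2 • deriv h (Z ω)) P) :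
    ∫ ω, Z ω • h (Z ω) ∂P
      = a • ∫ ω, X ω ^ 2 • h (Z ω) ∂P + (w : ℝ) • ∫ ω, X ω ^ 2 • deriv h (Z ω) ∂P := by
  simp only [hZ] at hZh hXh hXh' ⊢
  have h_continuous := hh.continuous
  have deriv_meas := stronglyMeasurable_deriv h
  have hasDerivAt_snd (x y : ℝ) : HasDerivAt (fun y ↦ x • h (x * (a * x + y)))
      (x ^ 2 • deriv h (x * (a * x + y))) y := by
    have hasDerivAt_inner : HasDerivAt (fun y ↦ x * (a * x + y)) x y := by
      simpa using ((hasDerivAt_id y).const_add (a * x)).const_mul x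
    refine (((hh _).hasDerivAt.scomp y hasDerivAt_inner).const_smul x).congr_deriv ?_
    module
  have split_product : (fun ω ↦ (W ω - 0) • X ω • h (X ω * (a * X ω + W ω))) = fun ω ↦
      (X ω * (a * X ω + W ω)) • h (X ω * (a * X ω + W ω))
        - a • X ω ^ 2 • h (X ω * (a * X ω + W ω)) := by
    ext ω
    module
  have stein := integral_sub_mean_smul_gaussianReal_of_indepFun hX hW hindep hasDerivAt_snd
    (by fun_prop) (by fun_prop) (split_product ▸ hZh.sub (hXh.fun_smul a)) hXh'
  rw [split_product, integral_sub hZh (hXh.fun_smul a), integral_smul] at stein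
  exact sub_eq_iff_eq_add'.1 stein

lemma integral_sq_smul_comp_productNormal {h : ℝ → E} (hX : HasLaw X (gaussianReal 0 v) P)
    (hW : AEMeasurable W P) (hindep : IndepFun X W P)
    (hZ : ∀ ω, Z ω = X ω * (a * X ω + W ω)) (hh : Differentiable ℝ h)
    (hh_int : Integrable (fun ω ↦ h (Z ω)) P)
    (hXh : Integrable (fun ω ↦ X ω ^ 2 • h (Z ω)) P)
    (hZh' : Integrable (fun ω ↦ Z ω • deriv h (Z ω)) P)
    (hXh' : Integrable (fun ω ↦ X ω ^ 2 • deriv h (Z ω)) P) :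
    ∫ ω, X ω ^ 2 • h (Z ω) ∂P
      = (v : ℝ) • (∫ ω, h (Z ω) ∂P + ∫ ω, Z ω • deriv h (Z ω) ∂P
        + a • ∫ ω, X ω ^ 2 • deriv h (Z ω) ∂P) := by
  simp only [hZ] at hh_int hXh hZh' hXh' ⊢
  have h_continuous := hh.continuous
  have deriv_meas := stronglyMeasurable_deriv h
  have hasDerivAt_fst (y x : ℝ) : HasDerivAt (fun x ↦ x • h (x * (a * x + y)))
      (h (x * (a * x + y)) + (x * (a * x + y)) • deriv h (x * (a * x + y))
        + a • x ^ 2 • deriv h (x * (a * x + y))) x := by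
    have hasDerivAt_inner : HasDerivAt (fun x ↦ x * (a * x + y)) (a * x + y + x * a) x := by
      simpa using (hasDerivAt_id x).fun_mul (((hasDerivAt_id x).const_mul a).add_const y)
    refine ((hasDerivAt_id x).smul
      ((hh _).hasDerivAt.scomp x hasDerivAt_inner)).congr_deriv ?_
    simp only [id, Function.comp]
    module
  have sq_smul : (fun ω ↦ (X ω - 0) • X ω • h (X ω * (a * X ω + W ω)))
      = fun ω ↦ X ω ^ 2 • h (X ω * (a * X ω + W ω)) := by
    ext ω
    module
  have stein := integral_sub_mean_smul_gaussianReal_of_indepFun hW hX hindep.symm hasDerivAt_fst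
    (by fun_prop) (by fun_prop) (sq_smul ▸ hXh) ((hh_int.fun_add hZh').add (hXh'.fun_smul a))
  rwa [sq_smul, integral_add (hh_int.fun_add hZh') (hXh'.fun_smul a), integral_add hh_int hZh',
    integral_smul] at stein

theorem product_normal_stein_identity_general {f : ℝ → E}
    (hX : HasLaw X (gaussianReal 0 v) P) (hW : HasLaw W (gaussianReal 0 w) P)
    (hindep : IndepFun X W P) (hZ : ∀ ω, Z ω = X ω * (a * X ω + W ω))
    (hf : Differentiable ℝ f) (hf' : Differentiable ℝ (deriv f))
    (hf_int : Integrable (fun ω ↦ f (Z ω)) P)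
    (hZf : Integrable (fun ω ↦ Z ω • f (Z ω)) P)
    (hf'_int : Integrable (fun ω ↦ deriv f (Z ω)) P)
    (hZf' : Integrable (fun ω ↦ Z ω • deriv f (Z ω)) P)
    (hZf'' : Integrable (fun ω ↦ Z ω • deriv (deriv f) (Z ω)) P)
    (hXf : Integrable (fun ω ↦ X ω ^ 2 • f (Z ω)) P)
    (hXf' : Integrable (fun ω ↦ X ω ^ 2 • deriv f (Z ω)) P)
    (hXf'' : Integrable (fun ω ↦ X ω ^ 2 • deriv (deriv f) (Z ω)) P) :
    ∫ ω, ((v * w * Z ω) • deriv (deriv f) (Z ω)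
        + (v * w + 2 * (a * v) * Z ω) • deriv f (Z ω)
        + (a * v - Z ω) • f (Z ω)) ∂P = 0 := by
  have parts_W := integral_productNormal_smul_comp
    hX.aemeasurable hW hindep hZ hf hZf hXf hXf'
  have parts_W' := integral_productNormal_smul_comp
    hX.aemeasurable hW hindep hZ hf' hZf' hXf' hXf''
  have parts_X := integral_sq_smul_comp_productNormal
    hX hW.aemeasurable hindep hZ hf hf_int hXf hZf' hXf'
  have parts_X' := integral_sq_smul_comp_productNormal
    hX hW.aemeasurable hindep hZ hf' hf'_int hXf' hZf'' hXf''
  have moments : ∫ ω, ((v * w * Z ω) • deriv (deriv f) (Z ω)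
        + (v * w + 2 * (a * v) * Z ω) • deriv f (Z ω) + (a * v - Z ω) • f (Z ω)) ∂P
      = (v * w : ℝ) • ∫ ω, Z ω • deriv (deriv f) (Z ω) ∂P
        + (v * w : ℝ) • ∫ ω, deriv f (Z ω) ∂P
        + (2 * (a * v)) • ∫ ω, Z ω • deriv f (Z ω) ∂P
        + (a * v) • ∫ ω, f (Z ω) ∂P - ∫ ω, Z ω • f (Z ω) ∂P := by
    have term_Zf'' := hZf''.fun_smul (v * w : ℝ)
    have term_f' := hf'_int.fun_smul (v * w : ℝ)
    have term_Zf' := hZf'.fun_smul (2 * (a * v))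
    have term_f := hf_int.fun_smul (a * v)
    simp only [← integral_smul]
    rw [← integral_add term_Zf'' term_f', ← integral_add (term_Zf''.fun_add term_f') term_Zf',
      ← integral_add ((term_Zf''.fun_add term_f').fun_add term_Zf') term_f,
      ← integral_sub (((term_Zf''.fun_add term_f').fun_add term_Zf').fun_add term_f) hZf]
    congr with ω
    module
  rw [moments]
  linear_combination (norm := module)
    -parts_W - a • parts_X - (w : ℝ) • parts_X' + (a * v) • parts_W'

end ProductNormal

/-- Stein characterisation (necessity, `n = 1` case) of the product of two zero mean
correlated normal random variables: for `X, V` independent standard normals,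
`Y = ρX + √(1 − ρ²)V`, `Z = XY` and any twice differentiable `f` with the stated
integrability conditions,
`E[(1 − ρ²) Z f''(Z) + ((1 − ρ²) + 2ρZ) f'(Z) + (ρ − Z) f(Z)] = 0`. -/
theorem product_normal_stein_identity
    {Ω : Type*} [MeasurableSpace Ω] (P : Measure Ω) [IsProbabilityMeasure P]
    (ρ : ℝ) (hρ : ρ ∈ Set.Ioo (-1 : ℝ) 1)
    (X V : Ω → ℝ) (hX : Measurable X) (hV : Measurable V)
    (hXlaw : P.map X = gaussianReal 0 1) (hVlaw : P.map V = gaussianReal 0 1)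
    (hindep : IndepFun X V P)
    (Y Z : Ω → ℝ)
    (hY : ∀ ω, Y ω = ρ * X ω + Real.sqrt (1 - ρ ^ 2) * V ω)
    (hZ : ∀ ω, Z ω = X ω * Y ω)
    (f : ℝ → ℝ) (hf : Differentiable ℝ f) (hf' : Differentiable ℝ (deriv f))
    (h1 : Integrable (fun ω => f (Z ω)) P)
    (h2 : Integrable (fun ω => Z ω * f (Z ω)) P)
    (h3 : Integrable (fun ω => deriv f (Z ω)) P)
    (h4 : Integrable (fun ω => Z ω * deriv f (Z ω)) P)
    (h5 : Integrable (fun ω => Z ω * deriv (deriv f) (Z ω)) P)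
    (h6 : Integrable (fun ω => (X ω) ^ 2 * f (Z ω)) P)
    (h7 : Integrable (fun ω => (X ω) ^ 2 * deriv f (Z ω)) P)
    (h8 : Integrable (fun ω => (X ω) ^ 2 * deriv (deriv f) (Z ω)) P) :
    ∫ ω, ((1 - ρ ^ 2) * Z ω * deriv (deriv f) (Z ω)
        + ((1 - ρ ^ 2) + 2 * ρ * Z ω) * deriv f (Z ω)
        + (ρ - Z ω) * f (Z ω)) ∂P = 0 := by
  have one_sub_sq_nonneg : 0 ≤ 1 - ρ ^ 2 := by nlinarith [hρ.1, hρ.2]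
  have hW := gaussianReal_const_mul ⟨hV.aemeasurable, hVlaw⟩ √(1 - ρ ^ 2)
  rw [mul_zero] at hW
  have hXW : IndepFun X (fun ω ↦ √(1 - ρ ^ 2) * V ω) P :=
    hindep.comp measurable_id (measurable_const_mul √(1 - ρ ^ 2))
  simpa [Real.sq_sqrt one_sub_sq_nonneg] using product_normal_stein_identity_general
    ⟨hX.aemeasurable, hXlaw⟩ hW hXW (fun ω ↦ (hZ ω).trans (by rw [hY]))
    hf hf' h1 h2 h3 h4 h5 h6 h7 h8
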